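/- arXiv:2006.05601 — 4 statements merged into one kernel-verified Lean document; each statement's English description precedes it below -/
import Mathlib

section
/- Let X_1, X_2, X_3 be ±1-valued random variables on a standard Borel probability space such that X_1 and X_3 are conditionally independent given the σ-algebra generated by X_2. Then Cov(X_1, X_3)·Var(X_2) = Cov(X_1, X_2)·Cov(X_2, X_3). -/
open MeasureTheory ProbabilityTheory

/-- Covariance `Cov(X,Y) = E[XY] - E[X]E[Y]`. -/
noncomputable def cov {Ω : Type*} [MeasurableSpace Ω] (μ : Measure Ω) (X Y : Ω → ℝ) : ℝ :=
  (∫ ω, X ω * Y ω ∂μ) - (∫ ω, X ω ∂μ) * (∫ ω, Y ω ∂μ)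

/-- Variance `Var(X) = Cov(X,X)`. -/
noncomputable def var {Ω : Type*} [MeasurableSpace Ω] (μ : Measure Ω) (X : Ω → ℝ) : ℝ :=
  cov μ X X

/-!
Only the two level sets of `X2` matter. Conditioning on either of them makes `X1` and `X3`
independent, and makes `X2` constant, hence independent of everything. For any pair `X, Y` that is
independent under both conditional measures `μ[|s]` and `μ[|sᶜ]`, all of the covariance comes from
the gap between the two conditional means:
`Cov(X, Y) = μ(s) μ(sᶜ) (E[X | s] - E[X | sᶜ]) (E[Y | s] - E[Y | sᶜ])`.
All four covariances in the theorem have this product form, and the two sides agree factor by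
factor.
-/

section ConditioningOnEvent

variable {Ω : Type*} {mΩ : MeasurableSpace Ω} {μ : Measure Ω} {s : Set Ω}

lemma measure_smul_cond_add_compl [IsFiniteMeasure μ] (hs : MeasurableSet s) :
    μ s • μ[|s] + μ sᶜ • μ[|sᶜ] = μ := by
  ext t -
  simpa [mul_comm] using cond_add_cond_compl_eq (t := t) hs μ

lemma integrable_cond {E : Type*} [NormedAddCommGroup E] {f : Ω → E}
    (hf : Integrable f μ) : Integrable f μ[|s] := by
  by_cases h : μ s = 0
  · simp [cond_eq_zero_of_meas_eq_zero h]
  · exact hf.restrict.smul_measure (ENNReal.inv_ne_top.2 h)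

lemma integrable_of_integrable_cond_compl [IsFiniteMeasure μ] {E : Type*} [NormedAddCommGroup E]
    {f : Ω → E} (hs : MeasurableSet s) (hf : Integrable f μ[|s]) (hfc : Integrable f μ[|sᶜ]) :
    Integrable f μ := by
  rw [← measure_smul_cond_add_compl (μ := μ) hs]
  exact (hf.smul_measure (measure_ne_top μ s)).add_measure
    (hfc.smul_measure (measure_ne_top μ sᶜ))

lemma integral_eq_cond_add_compl [IsFiniteMeasure μ] {E : Type*} [NormedAddCommGroup E]
    [NormedSpace ℝ E] {f : Ω → E} (hs : MeasurableSet s) (hf : Integrable f μ) :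
    ∫ ω, f ω ∂μ = μ.real s • ∫ ω, f ω ∂μ[|s] + μ.real sᶜ • ∫ ω, f ω ∂μ[|sᶜ] := by
  conv_lhs => rw [← measure_smul_cond_add_compl (μ := μ) hs]
  rw [integral_add_measure ((integrable_cond hf).smul_measure (measure_ne_top μ s))
      ((integrable_cond hf).smul_measure (measure_ne_top μ sᶜ)),
    integral_smul_measure, integral_smul_measure, measureReal_def, measureReal_def]

theorem cov_eq_of_indepFun_cond_compl [IsProbabilityMeasure μ] {X Y : Ω → ℝ}
    (hs : MeasurableSet s) (hX : Integrable X μ) (hY : Integrable Y μ)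
    (hXY : X ⟂ᵢ[μ[|s]] Y) (hXYc : X ⟂ᵢ[μ[|sᶜ]] Y) :
    cov μ X Y = μ.real s * μ.real sᶜ * (∫ ω, X ω ∂μ[|s] - ∫ ω, X ω ∂μ[|sᶜ]) *
      (∫ ω, Y ω ∂μ[|s] - ∫ ω, Y ω ∂μ[|sᶜ]) := by
  have hX' {t : Set Ω} : Integrable X μ[|t] := integrable_cond hX
  have hY' {t : Set Ω} : Integrable Y μ[|t] := integrable_cond hY
  have hmul : Integrable (fun ω ↦ X ω * Y ω) μ :=
    integrable_of_integrable_cond_compl hs (hXY.integrable_mul hX' hY')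
      (hXYc.integrable_mul hX' hY')
  have hcompl : μ.real sᶜ = 1 - μ.real s := probReal_compl_eq_one_sub hs
  rw [cov, integral_eq_cond_add_compl hs hX, integral_eq_cond_add_compl hs hY,
    integral_eq_cond_add_compl hs hmul,
    hXY.integral_fun_mul_eq_mul_integral hX'.aestronglyMeasurable hY'.aestronglyMeasurable,
    hXYc.integral_fun_mul_eq_mul_integral hX'.aestronglyMeasurable hY'.aestronglyMeasurable,
    hcompl]
  simp only [smul_eq_mul]
  ring

end ConditioningOnEvent

section CondExpKernel

variable {Ω γ : Type*} {m mΩ : MeasurableSpace Ω} [StandardBorelSpace Ω] {mγ : MeasurableSpace γ}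
  {μ : Measure Ω} [IsFiniteMeasure μ] {Z : Ω → γ} {s u : Set Ω} {c : γ}

lemma setLIntegral_condExpKernel (hm : m ≤ mΩ) (hs : MeasurableSet[m] s) (hu : MeasurableSet u) :
    ∫⁻ ω in s, condExpKernel μ m ω u ∂μ = μ (s ∩ u) := by
  calc ∫⁻ ω in s, condExpKernel μ m ω u ∂μ
      = ∫⁻ ω in s, condExpKernel μ m ω u ∂(μ.trim hm) := by
        rw [restrict_trim hm μ hs, lintegral_trim hm (measurable_condExpKernel hu)]
    _ = (μ.trim hm ⊗ₘ condExpKernel μ m) (s ×ˢ u) := (Measure.compProd_apply_prod hs hu).symm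
    _ = μ (Function.diag ⁻¹' s ×ˢ u) := by
        rw [compProd_trim_condExpKernel hm,
          Measure.map_apply (f := Function.diag) ((measurable_id'' hm).prodMk measurable_id)
            (hs.prod hu)]
    _ = μ (s ∩ u) := rfl

lemma lintegral_condExpKernel_cond (hm : m ≤ mΩ) (hs : MeasurableSet[m] s) (hu : MeasurableSet u) :
    ∫⁻ ω, condExpKernel μ m ω u ∂μ[|s] = μ[u | s] := by
  rw [cond_apply (hm s hs), ← setLIntegral_condExpKernel hm hs hu, ProbabilityTheory.cond,
    lintegral_smul_measure, smul_eq_mul]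

lemma condExpKernel_comap_congr {ω₁ ω₂ : Ω} (h : Z ω₁ = Z ω₂) :
    condExpKernel μ (mγ.comap Z) ω₁ = condExpKernel μ (mγ.comap Z) ω₂ :=
  Measure.ext fun _ hu ↦ (measurable_condExpKernel hu).factorsThrough h

lemma condExpKernel_comap_ae_eq_cond (hZ : Measurable Z) (hs : MeasurableSet[mγ.comap Z] s)
    (hc : ∀ᵐ ω ∂μ[|s], Z ω = c) :
    ∀ᵐ ω ∂μ[|s], condExpKernel μ (mγ.comap Z) ω = μ[|s] := by
  by_cases h0 : μ s = 0
  · simp [cond_eq_zero_of_meas_eq_zero h0]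
  have := cond_isProbabilityMeasure h0
  filter_upwards [hc] with ω₀ hω₀
  ext u hu
  have hconst : ∀ᵐ ω ∂μ[|s],
      condExpKernel μ (mγ.comap Z) ω u = condExpKernel μ (mγ.comap Z) ω₀ u := by
    filter_upwards [hc] with ω hω
    rw [condExpKernel_comap_congr (hω.trans hω₀.symm)]
  calc condExpKernel μ (mγ.comap Z) ω₀ u
      = ∫⁻ ω, condExpKernel μ (mγ.comap Z) ω u ∂μ[|s] := by
        rw [lintegral_congr_ae hconst, lintegral_const, measure_univ, mul_one]
    _ = μ[u | s] := lintegral_condExpKernel_cond hZ.comap_le hs hu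

lemma indepFun_cond_of_condIndepFun {β β' : Type*} {mβ : MeasurableSpace β}
    {mβ' : MeasurableSpace β'} {X : Ω → β} {Y : Ω → β'} (hZ : Measurable Z)
    (hXY : CondIndepFun (mγ.comap Z) hZ.comap_le X Y μ)
    (hs : MeasurableSet[mγ.comap Z] s) (hc : ∀ᵐ ω ∂μ[|s], Z ω = c) :
    X ⟂ᵢ[μ[|s]] Y := by
  rw [indepFun_iff_measure_inter_preimage_eq_mul]
  intro A B hA hB
  by_cases h0 : μ s = 0
  · simp [cond_eq_zero_of_meas_eq_zero h0]
  have := cond_isProbabilityMeasure h0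
  have hmul := ae_of_ae_trim hZ.comap_le
    (Kernel.IndepFun.meas_inter hXY ⟨A, hA, rfl⟩ ⟨B, hB, rfl⟩)
  obtain ⟨ω, hκ, hω⟩ := ((condExpKernel_comap_ae_eq_cond hZ hs hc).and
    (cond_absolutelyContinuous.ae_le hmul)).exists
  rwa [hκ] at hω

end CondExpKernel

lemma indepFun_of_ae_eq_const {Ω β β' : Type*} [MeasurableSpace Ω] [MeasurableSpace β]
    [MeasurableSpace β'] {μ : Measure Ω} [IsZeroOrProbabilityMeasure μ] {X : Ω → β} {c : β}
    (hX : ∀ᵐ ω ∂μ, X ω = c) (Y : Ω → β') : X ⟂ᵢ[μ] Y :=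
  (indepFun_const_left c Y).congr (Filter.EventuallyEq.symm hX) .rfl

lemma integrable_of_ae_eq_or_eq {Ω E : Type*} {mΩ : MeasurableSpace Ω} [NormedAddCommGroup E]
    {μ : Measure Ω} [IsFiniteMeasure μ] {X : Ω → E} {a b : E} (hX : AEStronglyMeasurable X μ)
    (hab : ∀ᵐ ω ∂μ, X ω = a ∨ X ω = b) : Integrable X μ := by
  refine .of_bound hX (max ‖a‖ ‖b‖) ?_
  filter_upwards [hab] with ω hω
  rcases hω with h | h <;> simp [h]

theorem corr_decay_base_general {Ω : Type*} [MeasurableSpace Ω] [StandardBorelSpace Ω]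
    (μ : Measure Ω) [IsProbabilityMeasure μ] (X1 X2 X3 : Ω → ℝ) {a b : ℝ}
    (hX1 : Integrable X1 μ) (hX2 : Measurable X2) (hX3 : Integrable X3 μ)
    (hab : ∀ᵐ ω ∂μ, X2 ω = a ∨ X2 ω = b)
    (hci : CondIndepFun (MeasurableSpace.comap X2 inferInstance) hX2.comap_le X1 X3 μ) :
    cov μ X1 X3 * var μ X2 = cov μ X1 X2 * cov μ X2 X3 := by
  have ha : MeasurableSet[MeasurableSpace.comap X2 inferInstance] (X2 ⁻¹' {a}) :=
    ⟨{a}, measurableSet_singleton a, rfl⟩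
  have hs : MeasurableSet (X2 ⁻¹' {a}) := hX2.comap_le _ ha
  have hX2_int : Integrable X2 μ := integrable_of_ae_eq_or_eq hX2.aestronglyMeasurable hab
  have hX2_a : ∀ᵐ ω ∂μ[|X2 ⁻¹' {a}], X2 ω = a := ae_cond_mem hs
  have hX2_b : ∀ᵐ ω ∂μ[|(X2 ⁻¹' {a})ᶜ], X2 ω = b := by
    filter_upwards [ae_cond_mem hs.compl, cond_absolutelyContinuous.ae_le hab] with ω hne h
    exact h.resolve_left hne
  have h_indep₂ (Y : Ω → ℝ) : X2 ⟂ᵢ[μ[|X2 ⁻¹' {a}]] Y := indepFun_of_ae_eq_const hX2_a Y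
  have h_indep₂_compl (Y : Ω → ℝ) : X2 ⟂ᵢ[μ[|(X2 ⁻¹' {a})ᶜ]] Y := indepFun_of_ae_eq_const hX2_b Y
  have h_indep₁₃ : X1 ⟂ᵢ[μ[|X2 ⁻¹' {a}]] X3 :=
    indepFun_cond_of_condIndepFun hX2 hci ha hX2_a
  have h_indep₁₃_compl : X1 ⟂ᵢ[μ[|(X2 ⁻¹' {a})ᶜ]] X3 :=
    indepFun_cond_of_condIndepFun hX2 hci ha.compl hX2_b
  have hcov₁₃ := cov_eq_of_indepFun_cond_compl hs hX1 hX3 h_indep₁₃ h_indep₁₃_compl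
  have hcov₂₂ := cov_eq_of_indepFun_cond_compl hs hX2_int hX2_int (h_indep₂ X2) (h_indep₂_compl X2)
  have hcov₁₂ := cov_eq_of_indepFun_cond_compl hs hX1 hX2_int (h_indep₂ X1).symm
    (h_indep₂_compl X1).symm
  have hcov₂₃ := cov_eq_of_indepFun_cond_compl hs hX2_int hX3 (h_indep₂ X3) (h_indep₂_compl X3)
  rw [var, hcov₁₃, hcov₂₂, hcov₁₂, hcov₂₃]
  ring

/-- If ±1-valued `X_1, X_2, X_3` on a standard Borel probability space are such that
`X_1 ⊥ X_3 | σ(X_2)`, then `Cov(X_1,X_3) ⬝ Var(X_2) = Cov(X_1,X_2) ⬝ Cov(X_2,X_3)`. -/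
theorem corr_decay_base {Ω : Type*} [MeasurableSpace Ω] [StandardBorelSpace Ω]
    (μ : Measure Ω) [IsProbabilityMeasure μ]
    (X1 X2 X3 : Ω → ℝ)
    (hX1 : Measurable X1) (hX2 : Measurable X2) (hX3 : Measurable X3)
    (hX1pm : ∀ᵐ ω ∂μ, X1 ω = 1 ∨ X1 ω = -1)
    (hX2pm : ∀ᵐ ω ∂μ, X2 ω = 1 ∨ X2 ω = -1)
    (hX3pm : ∀ᵐ ω ∂μ, X3 ω = 1 ∨ X3 ω = -1)
    (hci : CondIndepFun (MeasurableSpace.comap X2 inferInstance) hX2.comap_le X1 X3 μ) :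
    cov μ X1 X3 * var μ X2 = cov μ X1 X2 * cov μ X2 X3 := by
  exact corr_decay_base_general μ X1 X2 X3
    (integrable_of_ae_eq_or_eq hX1.aestronglyMeasurable hX1pm) hX2
    (integrable_of_ae_eq_or_eq hX3.aestronglyMeasurable hX3pm) hX2pm hci
end

section
/- Let X_1, X_2, X_3 be ±1-valued random variables on a standard Borel probability space such that X_2 and X_3 are conditionally independent given the σ-algebra generated by X_1, and let X_i^e = ε_i X_i be noisy versions where ε_1, ε_2, ε_3 are ±1-valued with P(ε_i = −1) = q_i ∈ [0, 1/2), and ε_1, ε_2, ε_3, (X_1, X_2, X_3) are mutually independent. Write Σ'_{i,j} = Cov(X_i^e, X_j^e) and Σ'_{1,1} = Var(X_1^e). If Σ'_{2,3} ≠ 0, then (1 − 2q_1)² = 1 − Σ'_{1,1} + Σ'_{1,2}Σ'_{1,3}/Σ'_{2,3}. -/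
open MeasureTheory ProbabilityTheory

/-!
Independent noise multiplies the covariance of two distinct nodes by the means of their noises,
and `E[ε_1] = 1 - 2 q_1`. Since `X_1` takes only two values, `E[X_2 | X_1]` and `E[X_3 | X_1]` are
affine in `X_1`, and the law of total covariance, whose within-group term vanishes by conditional
independence, gives `Var(X_1) Cov(X_2, X_3) = Cov(X_1, X_2) Cov(X_1, X_3)`. Hence
`Σ'_{1,2} Σ'_{1,3} / Σ'_{2,3} = (1 - 2 q_1)² Var(X_1) = (1 - 2 q_1)² - E[X_1^e]²`, while
`Σ'_{1,1} = 1 - E[X_1^e]²`.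
-/

section Covariance

variable {Ω : Type*} {m mΩ : MeasurableSpace Ω} {μ : Measure Ω} {X Y Z X' Y' : Ω → ℝ}

lemma cov_congr_ae (hX : X =ᵐ[μ] X') (hY : Y =ᵐ[μ] Y') : cov μ X Y = cov μ X' Y' := by
  have hXY : ∫ ω, X ω * Y ω ∂μ = ∫ ω, X' ω * Y' ω ∂μ := integral_congr_ae (hX.mul hY)
  rw [cov, cov, hXY, integral_congr_ae hX, integral_congr_ae hY]

lemma cov_condExp_condExp [IsFiniteMeasure μ] (hm : m ≤ mΩ)
    (h : μ[Y * Z | m] =ᵐ[μ] μ[Y | m] * μ[Z | m]) :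
    cov μ (μ[Y | m]) (μ[Z | m]) = cov μ Y Z := by
  have hYZ : ∫ ω, (μ[Y | m]) ω * (μ[Z | m]) ω ∂μ = ∫ ω, Y ω * Z ω ∂μ :=
    (integral_congr_ae h).symm.trans (integral_condExp hm)
  rw [cov, cov, hYZ, integral_condExp hm, integral_condExp hm]

lemma cov_condExp_right [IsFiniteMeasure μ] (hm : m ≤ mΩ) (hXm : StronglyMeasurable[m] X)
    (hX : Integrable X μ) (hY : Integrable Y μ) (hXY : Integrable (X * Y) μ) :
    cov μ X (μ[Y | m]) = cov μ X Y := by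
  have hX_eq : μ[X | m] = X := condExp_of_stronglyMeasurable hm hXm hX
  have hpull : μ[X * Y | m] =ᵐ[μ] μ[X | m] * μ[Y | m] := by
    rw [hX_eq]
    exact condExp_mul_of_stronglyMeasurable_left hXm hXY hY
  simpa only [hX_eq] using cov_condExp_condExp hm hpull

variable [IsProbabilityMeasure μ]

lemma cov_eq_covariance (hX : MemLp X 2 μ) (hY : MemLp Y 2 μ) : cov μ X Y = cov[X, Y; μ] :=
  (covariance_eq_sub hX hY).symm

lemma cov_affine_affine (hX : MemLp X 2 μ) (a b c d : ℝ) :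
    cov μ (fun ω => a + b * X ω) (fun ω => c + d * X ω) = b * d * var μ X := by
  have hbX : MemLp (fun ω => b * X ω) 2 μ := hX.const_mul b
  have hdX : MemLp (fun ω => d * X ω) 2 μ := hX.const_mul d
  have habX : MemLp (fun ω => a + b * X ω) 2 μ := (memLp_const a).add hbX
  have hcdX : MemLp (fun ω => c + d * X ω) 2 μ := (memLp_const c).add hdX
  rw [var, cov_eq_covariance hX hX, cov_eq_covariance habX hcdX,
    covariance_const_add_left (hbX.integrable one_le_two),
    covariance_const_add_right (hdX.integrable one_le_two),
    covariance_const_mul_left, covariance_const_mul_right, mul_assoc]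

end Covariance

section CondIndep

variable {Ω : Type*} {m mΩ : MeasurableSpace Ω} [StandardBorelSpace Ω] {hm : m ≤ mΩ}
  {μ : Measure Ω} [IsFiniteMeasure μ]

lemma ae_indepFun_condExpKernel {β γ : Type*} [MeasurableSpace β] [MeasurableSpace γ]
    [MeasurableSpace.CountableOrCountablyGenerated Ω (β × γ)] {Y : Ω → β} {Z : Ω → γ}
    (hY : Measurable Y) (hZ : Measurable Z) (h : CondIndepFun m hm Y Z μ) :
    ∀ᵐ ω ∂μ, IndepFun Y Z (condExpKernel μ m ω) := by
  have hlaw := (condIndepFun_iff_map_prod_eq_prod_map_map hY hZ).1 h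
  filter_upwards [ae_of_ae_trim hm hlaw] with ω hω
  rw [indepFun_iff_map_prod_eq_prod_map_map hY.aemeasurable hZ.aemeasurable]
  rwa [Kernel.map_apply _ (hY.prodMk hZ), Kernel.prod_apply, Kernel.map_apply _ hY,
    Kernel.map_apply _ hZ] at hω

lemma condExp_mul_of_condIndepFun {Y Z : Ω → ℝ} (hYm : Measurable Y) (hZm : Measurable Z)
    (hY : Integrable Y μ) (hZ : Integrable Z μ) (hYZ : Integrable (Y * Z) μ)
    (h : CondIndepFun m hm Y Z μ) : μ[Y * Z | m] =ᵐ[μ] μ[Y | m] * μ[Z | m] := by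
  filter_upwards [ae_indepFun_condExpKernel hYm hZm h,
    condExp_ae_eq_integral_condExpKernel hm hY, condExp_ae_eq_integral_condExpKernel hm hZ,
    condExp_ae_eq_integral_condExpKernel hm hYZ] with ω hind hωY hωZ hωYZ
  rw [Pi.mul_apply, hωYZ, hωY, hωZ]
  exact hind.integral_mul_eq_mul_integral hYm.aestronglyMeasurable hZm.aestronglyMeasurable

end CondIndep

section TwoValued

variable {Ω : Type*} {mΩ : MeasurableSpace Ω} {μ : Measure Ω} {X : Ω → ℝ} {u v : ℝ}

lemma memLp_top_of_two_valued (hXm : AEStronglyMeasurable X μ)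
    (hX : ∀ᵐ ω ∂μ, X ω = u ∨ X ω = v) : MemLp X ⊤ μ := by
  refine memLp_top_of_bound hXm (max |u| |v|) ?_
  filter_upwards [hX] with ω hω
  rcases hω with hω | hω <;> simp [hω]

lemma exists_condExp_comap_ae_eq_affine (hX : ∀ᵐ ω ∂μ, X ω = u ∨ X ω = v) (Y : Ω → ℝ) :
    ∃ a b : ℝ, μ[Y | MeasurableSpace.comap X inferInstance] =ᵐ[μ] fun ω => a + b * X ω := by
  obtain ⟨g, -, hg⟩ := (stronglyMeasurable_condExp (μ := μ) (f := Y)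
    (m := MeasurableSpace.comap X inferInstance)).exists_eq_measurable_comp
  -- The line through `(u, g u)` and `(v, g v)`; the slope is `0` if `u = v`.
  refine ⟨g u - (g v - g u) / (v - u) * u, (g v - g u) / (v - u), ?_⟩
  filter_upwards [hX] with ω hω
  rw [hg, Function.comp_apply]
  rcases hω with hω | hω <;> rw [hω]
  · ring
  · rcases eq_or_ne u v with rfl | huv
    · simp
    · field [sub_ne_zero.2 huv.symm]

theorem var_mul_cov_of_condIndepFun [StandardBorelSpace Ω] [IsProbabilityMeasure μ] {Y Z : Ω → ℝ}
    (hXm : Measurable X) (hX : ∀ᵐ ω ∂μ, X ω = u ∨ X ω = v)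
    (hYm : Measurable Y) (hZm : Measurable Z)
    (hY : Integrable Y μ) (hZ : Integrable Z μ) (hYZ : Integrable (Y * Z) μ)
    (h : CondIndepFun (MeasurableSpace.comap X inferInstance) hXm.comap_le Y Z μ) :
    var μ X * cov μ Y Z = cov μ X Y * cov μ X Z := by
  have hXtop : MemLp X ⊤ μ := memLp_top_of_two_valued hXm.aestronglyMeasurable hX
  have hX2 : MemLp X 2 μ := hXtop.mono_exponent le_top
  have hX1 : Integrable X μ := hXtop.integrable le_top
  have cov_left {W : Ω → ℝ} {a b : ℝ} (hW : Integrable W μ)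
      (hab : μ[W | MeasurableSpace.comap X inferInstance] =ᵐ[μ] fun ω => a + b * X ω) :
      cov μ X W = b * var μ X := calc
    cov μ X W = cov μ X (μ[W | MeasurableSpace.comap X inferInstance]) :=
      (cov_condExp_right hXm.comap_le (comap_measurable X).stronglyMeasurable hX1 hW
        (hW.mul_of_top_right hXtop)).symm
    _ = cov μ (fun ω => 0 + 1 * X ω) (fun ω => a + b * X ω) :=
      cov_congr_ae (.of_forall fun ω => by ring) hab
    _ = b * var μ X := by rw [cov_affine_affine hX2, one_mul]
  obtain ⟨a, b, hab⟩ := exists_condExp_comap_ae_eq_affine hX Y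
  obtain ⟨c, d, hcd⟩ := exists_condExp_comap_ae_eq_affine hX Z
  have hcovYZ : cov μ Y Z = b * d * var μ X := by
    rw [← cov_condExp_condExp hXm.comap_le (condExp_mul_of_condIndepFun hYm hZm hY hZ hYZ h),
      cov_congr_ae hab hcd, cov_affine_affine hX2]
  rw [hcovYZ, cov_left hY hab, cov_left hZ hcd]
  ring

end TwoValued

section PlusMinusOne

variable {Ω : Type*} {mΩ : MeasurableSpace Ω} {μ : Measure Ω} {X Y : Ω → ℝ}

lemma ae_mul_eq_one_or_neg_one (hX : ∀ᵐ ω ∂μ, X ω = 1 ∨ X ω = -1)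
    (hY : ∀ᵐ ω ∂μ, Y ω = 1 ∨ Y ω = -1) : ∀ᵐ ω ∂μ, X ω * Y ω = 1 ∨ X ω * Y ω = -1 := by
  filter_upwards [hX, hY] with ω hωX hωY
  rcases hωX with hωX | hωX <;> rcases hωY with hωY | hωY <;> simp [hωX, hωY]

variable [IsProbabilityMeasure μ]

lemma var_of_eq_one_or_neg_one (hX : ∀ᵐ ω ∂μ, X ω = 1 ∨ X ω = -1) :
    var μ X = 1 - (∫ ω, X ω ∂μ) ^ 2 := by
  have hsq : (fun ω => X ω * X ω) =ᵐ[μ] fun _ => 1 := hX.mono fun ω hω => mul_self_eq_one_iff.2 hω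
  rw [var, cov, integral_congr_ae hsq, integral_const, probReal_univ, one_smul, sq]

lemma integral_of_eq_one_or_neg_one (hXm : AEMeasurable X μ)
    (hX : ∀ᵐ ω ∂μ, X ω = 1 ∨ X ω = -1) : ∫ ω, X ω ∂μ = 1 - 2 * μ.real {ω | X ω = -1} := by
  have hA : NullMeasurableSet {ω | X ω = -1} μ :=
    hXm.nullMeasurable (measurableSet_singleton (-1))
  have hX_eq : X =ᵐ[μ] fun ω => 1 - {ω | X ω = -1}.indicator (fun _ => 2) ω := by
    filter_upwards [hX] with ω hω
    rcases hω with hω | hω <;> norm_num [Set.indicator_apply, hω]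
  rw [integral_congr_ae hX_eq, integral_sub (integrable_const 1)
    ((integrable_const 2).indicator₀ hA), integral_indicator₀ hA]
  simp [mul_comm]

end PlusMinusOne

lemma cov_mul_mul_of_indepFun {Ω : Type*} {mΩ : MeasurableSpace Ω} {μ : Measure Ω}
    {ε δ Y Z : Ω → ℝ}
    (hε : AEStronglyMeasurable ε μ) (hδ : AEStronglyMeasurable δ μ)
    (hY : AEStronglyMeasurable Y μ) (hZ : AEStronglyMeasurable Z μ) (hεδ : IndepFun ε δ μ)
    (h : IndepFun (fun ω => (ε ω, δ ω)) (fun ω => (Y ω, Z ω)) μ) :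
    cov μ (fun ω => ε ω * Y ω) (fun ω => δ ω * Z ω)
      = (∫ ω, ε ω ∂μ) * (∫ ω, δ ω ∂μ) * cov μ Y Z := by
  have hεY : ∫ ω, ε ω * Y ω ∂μ = (∫ ω, ε ω ∂μ) * ∫ ω, Y ω ∂μ :=
    (h.comp measurable_fst measurable_fst).integral_fun_mul_eq_mul_integral hε hY
  have hδZ : ∫ ω, δ ω * Z ω ∂μ = (∫ ω, δ ω ∂μ) * ∫ ω, Z ω ∂μ :=
    (h.comp measurable_snd measurable_snd).integral_fun_mul_eq_mul_integral hδ hZ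
  have hprod : IndepFun (fun ω => ε ω * δ ω) (fun ω => Y ω * Z ω) μ :=
    h.comp (measurable_fst.mul measurable_snd) (measurable_fst.mul measurable_snd)
  have hεYδZ : ∫ ω, ε ω * Y ω * (δ ω * Z ω) ∂μ
      = (∫ ω, ε ω ∂μ) * (∫ ω, δ ω ∂μ) * ∫ ω, Y ω * Z ω ∂μ := by
    simp_rw [mul_mul_mul_comm]
    rw [hprod.integral_fun_mul_eq_mul_integral (hε.mul hδ) (hY.mul hZ),
      hεδ.integral_fun_mul_eq_mul_integral hε hδ]
  rw [cov, cov, hεYδZ, hεY, hδZ]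
  ring

theorem noisy_quadratic_general {Ω : Type*} [MeasurableSpace Ω] [StandardBorelSpace Ω]
    {μ : Measure Ω} [IsProbabilityMeasure μ] {X1 X2 X3 ε1 ε2 ε3 : Ω → ℝ} {q1 : ℝ}
    (hX1 : Measurable X1) (hX2 : Measurable X2) (hX3 : Measurable X3)
    (hε1 : AEMeasurable ε1 μ) (hε2 : AEMeasurable ε2 μ) (hε3 : AEMeasurable ε3 μ)
    (hX1pm : ∀ᵐ ω ∂μ, X1 ω = 1 ∨ X1 ω = -1) (hε1pm : ∀ᵐ ω ∂μ, ε1 ω = 1 ∨ ε1 ω = -1)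
    (hX2int : Integrable X2 μ) (hX3int : Integrable X3 μ) (hX23int : Integrable (X2 * X3) μ)
    (hq1 : μ.real {ω | ε1 ω = -1} = q1)
    (hci : CondIndepFun (MeasurableSpace.comap X1 inferInstance) hX1.comap_le X2 X3 μ)
    (hε12 : IndepFun ε1 ε2 μ) (hε13 : IndepFun ε1 ε3 μ) (hε23 : IndepFun ε2 ε3 μ)
    (hεX : IndepFun (fun ω => (ε1 ω, ε2 ω, ε3 ω)) (fun ω => (X1 ω, X2 ω, X3 ω)) μ)
    (hne : cov μ (fun ω => ε2 ω * X2 ω) (fun ω => ε3 ω * X3 ω) ≠ 0) :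
    (1 - 2 * q1) ^ 2 =
      1 - var μ (fun ω => ε1 ω * X1 ω)
        + cov μ (fun ω => ε1 ω * X1 ω) (fun ω => ε2 ω * X2 ω)
          * cov μ (fun ω => ε1 ω * X1 ω) (fun ω => ε3 ω * X3 ω)
          / cov μ (fun ω => ε2 ω * X2 ω) (fun ω => ε3 ω * X3 ω) := by
  have hmean : ∫ ω, ε1 ω ∂μ = 1 - 2 * q1 := hq1 ▸ integral_of_eq_one_or_neg_one hε1 hε1pm
  have hmeanX : ∫ ω, ε1 ω * X1 ω ∂μ = (1 - 2 * q1) * ∫ ω, X1 ω ∂μ := by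
    rw [← hmean]
    exact (hεX.comp measurable_fst measurable_fst).integral_fun_mul_eq_mul_integral
      hε1.aestronglyMeasurable hX1.aestronglyMeasurable
  have hvar := var_of_eq_one_or_neg_one (ae_mul_eq_one_or_neg_one hε1pm hX1pm)
  have hkey := var_mul_cov_of_condIndepFun hX1 hX1pm hX2 hX3 hX2int hX3int hX23int hci
  have h12 : Measurable fun p : ℝ × ℝ × ℝ => (p.1, p.2.1) := by fun_prop
  have h13 : Measurable fun p : ℝ × ℝ × ℝ => (p.1, p.2.2) := by fun_prop
  have hcov12 := cov_mul_mul_of_indepFun hε1.aestronglyMeasurable hε2.aestronglyMeasurable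
    hX1.aestronglyMeasurable hX2.aestronglyMeasurable hε12 (hεX.comp h12 h12)
  have hcov13 := cov_mul_mul_of_indepFun hε1.aestronglyMeasurable hε3.aestronglyMeasurable
    hX1.aestronglyMeasurable hX3.aestronglyMeasurable hε13 (hεX.comp h13 h13)
  have hcov23 := cov_mul_mul_of_indepFun hε2.aestronglyMeasurable hε3.aestronglyMeasurable
    hX2.aestronglyMeasurable hX3.aestronglyMeasurable hε23 (hεX.comp measurable_snd measurable_snd)
  have hratio : cov μ (fun ω => ε1 ω * X1 ω) (fun ω => ε2 ω * X2 ω)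
        * cov μ (fun ω => ε1 ω * X1 ω) (fun ω => ε3 ω * X3 ω)
        / cov μ (fun ω => ε2 ω * X2 ω) (fun ω => ε3 ω * X3 ω)
      = (1 - 2 * q1) ^ 2 * var μ X1 := by
    rw [div_eq_iff hne, hcov12, hcov13, hcov23, hmean]
    linear_combination
      -(1 - 2 * q1) ^ 2 * (∫ ω, ε2 ω ∂μ) * (∫ ω, ε3 ω ∂μ) * hkey
  rw [hratio, hvar, hmeanX, var_of_eq_one_or_neg_one hX1pm]
  ring

/-- Let `X_2 ⊥ X_3 | σ(X_1)` for ±1-valued `X_1, X_2, X_3`, and let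
`X_i^e = ε_i X_i` be noisy versions with flip probabilities `q_i ∈ [0, 1/2)`, where
`ε_1, ε_2, ε_3, (X_1,X_2,X_3)` are mutually independent. Writing `Σ'_{i,j}` for the noisy
covariances and `Σ'_{1,1}` for the noisy variance, if `Σ'_{2,3} ≠ 0` then
`(1 - 2q_1)² = 1 - Σ'_{1,1} + Σ'_{1,2}Σ'_{1,3}/Σ'_{2,3}`. -/
theorem noisy_quadratic {Ω : Type*} [MeasurableSpace Ω] [StandardBorelSpace Ω]
    (μ : Measure Ω) [IsProbabilityMeasure μ]
    (X1 X2 X3 ε1 ε2 ε3 : Ω → ℝ) (q1 q2 q3 : ℝ)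
    (hX1 : Measurable X1) (hX2 : Measurable X2) (hX3 : Measurable X3)
    (hε1 : Measurable ε1) (hε2 : Measurable ε2) (hε3 : Measurable ε3)
    (hX1pm : ∀ᵐ ω ∂μ, X1 ω = 1 ∨ X1 ω = -1)
    (hX2pm : ∀ᵐ ω ∂μ, X2 ω = 1 ∨ X2 ω = -1)
    (hX3pm : ∀ᵐ ω ∂μ, X3 ω = 1 ∨ X3 ω = -1)
    (hε1pm : ∀ᵐ ω ∂μ, ε1 ω = 1 ∨ ε1 ω = -1)
    (hε2pm : ∀ᵐ ω ∂μ, ε2 ω = 1 ∨ ε2 ω = -1)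
    (hε3pm : ∀ᵐ ω ∂μ, ε3 ω = 1 ∨ ε3 ω = -1)
    (hq1 : (μ {ω | ε1 ω = -1}).toReal = q1) (hq1' : 0 ≤ q1) (hq1'' : q1 < 1 / 2)
    (hq2 : (μ {ω | ε2 ω = -1}).toReal = q2) (hq2' : 0 ≤ q2) (hq2'' : q2 < 1 / 2)
    (hq3 : (μ {ω | ε3 ω = -1}).toReal = q3) (hq3' : 0 ≤ q3) (hq3'' : q3 < 1 / 2)
    -- `X_2 ⊥ X_3 | σ(X_1)`:
    (hci : CondIndepFun (MeasurableSpace.comap X1 inferInstance) hX1.comap_le X2 X3 μ)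
    -- mutual independence of `ε_1, ε_2, ε_3, (X_1, X_2, X_3)`:
    (hindep1 : IndepFun ε1 ε2 μ)
    (hindep2 : IndepFun (fun ω => (ε1 ω, ε2 ω)) ε3 μ)
    (hindep3 : IndepFun (fun ω => (ε1 ω, ε2 ω, ε3 ω)) (fun ω => (X1 ω, X2 ω, X3 ω)) μ)
    (hne : cov μ (fun ω => ε2 ω * X2 ω) (fun ω => ε3 ω * X3 ω) ≠ 0) :
    (1 - 2 * q1) ^ 2 =
      1 - var μ (fun ω => ε1 ω * X1 ω)
        + cov μ (fun ω => ε1 ω * X1 ω) (fun ω => ε2 ω * X2 ω)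
          * cov μ (fun ω => ε1 ω * X1 ω) (fun ω => ε3 ω * X3 ω)
          / cov μ (fun ω => ε2 ω * X2 ω) (fun ω => ε3 ω * X3 ω) := by
  have hX2top : MemLp X2 ⊤ μ := memLp_top_of_two_valued hX2.aestronglyMeasurable hX2pm
  have hX3top : MemLp X3 ⊤ μ := memLp_top_of_two_valued hX3.aestronglyMeasurable hX3pm
  exact noisy_quadratic_general hX1 hX2 hX3 hε1.aemeasurable hε2.aemeasurable hε3.aemeasurable
    hX1pm hε1pm (hX2top.integrable le_top) (hX3top.integrable le_top)
    ((hX3top.integrable le_top).mul_of_top_right hX2top) hq1 hci hindep1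
    (hindep2.comp measurable_fst measurable_id) (hindep2.comp measurable_snd measurable_id)
    hindep3 hne
end

section
/- Let a, b, c, d and ã, b̃, c̃, d̃ be real numbers, and let δ ≥ 0 and s > 0 be such that |a − ã| ≤ δ, |b − b̃| ≤ δ, |c − c̃| ≤ δ, |d − d̃| ≤ δ, that |ã| ≥ s, |b̃| ≥ s, |c̃| ≥ s, |d̃| ≥ s, that |ã| ≤ 1 and |b̃| ≤ 1, and that δ/s ≤ 0.4. Then |ab/(cd) − ãb̃/(c̃d̃)| ≤ 16δ/s³. -/
/-!
With `r = δ / s`, the factors `c, d` are perturbed by at most `r` times their size, and `a, b` by at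
most `r` times the upper bound `1` (as `s ≤ 1`). So numerator and denominator each have relative
error at most `(1 + r)² - 1`, and these two errors add up in the quotient. For the size of
the perturbed denominator this would only give `|cd| ≥ (2 - (1 + r)²) |c̃d̃|`, which at `r = 0.4` is
far too weak; bounding each factor separately gives `|cd| ≥ (1 - r)² |c̃d̃|`, and
`2 ((1 + r)² - 1) / (1 - r)² ≤ 16 r` for `0 ≤ r ≤ 0.4`.
-/

theorem norm_mul_sub_mul_le_of_norm_sub_le {R : Type*} [NonUnitalSeminormedRing R]
    {a b a' b' : R} {r t A B : ℝ} (ha' : ‖a'‖ ≤ A) (hb' : ‖b'‖ ≤ B)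
    (ha : ‖a - a'‖ ≤ r * A) (hb : ‖b - b'‖ ≤ t * B) :
    ‖a * b - a' * b'‖ ≤ ((1 + r) * (1 + t) - 1) * (A * B) :=
  calc
    ‖a * b - a' * b'‖ = ‖(a - a') * (b - b') + (a - a') * b' + a' * (b - b')‖ := by
      congr 1; noncomm_ring
    _ ≤ r * A * (t * B) + r * A * B + A * (t * B) :=
      norm_add_le_of_le (norm_add_le_of_le (norm_mul_le_of_le ha hb) (norm_mul_le_of_le ha hb'))
        (norm_mul_le_of_le ha' hb)
    _ = ((1 + r) * (1 + t) - 1) * (A * B) := by ring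

theorem one_sub_mul_le_norm_of_norm_sub_le {E : Type*} [SeminormedAddCommGroup E] {x x' : E}
    {r C : ℝ} (hx' : C ≤ ‖x'‖) (h : ‖x - x'‖ ≤ r * C) : (1 - r) * C ≤ ‖x‖ := by
  linarith [norm_sub_norm_le x' x, norm_sub_rev x x']

section NormedDivisionRing

variable {K : Type*} [NormedDivisionRing K]

theorem norm_div_sub_div_le_of_norm_sub_le {p q p' q' : K} {ε η P : ℝ} (hq : q ≠ 0)
    (hq' : q' ≠ 0) (hP : ‖p'‖ ≤ P) (hp : ‖p - p'‖ ≤ ε * P) (hqq' : ‖q - q'‖ ≤ η * ‖q'‖) :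
    ‖p / q - p' / q'‖ ≤ (ε + η) * P / ‖q‖ := by
  have hη : 0 ≤ η := nonneg_of_mul_nonneg_left ((norm_nonneg _).trans hqq') (norm_pos_iff.2 hq')
  rw [le_div_iff₀ (norm_pos_iff.2 hq), ← norm_mul]
  calc
    ‖(p / q - p' / q') * q‖ = ‖(p - p') - p' / q' * (q - q')‖ := by
      rw [sub_mul, mul_sub, div_mul_cancel₀ _ hq, div_mul_cancel₀ _ hq', sub_sub_sub_cancel_right]
    _ ≤ ε * P + ‖p'‖ / ‖q'‖ * (η * ‖q'‖) := by
      refine norm_sub_le_of_le hp ?_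
      rw [norm_mul, norm_div]
      gcongr
    _ = ε * P + η * ‖p'‖ := by
      rw [mul_left_comm, div_mul_cancel₀ _ (norm_ne_zero_iff.2 hq')]
    _ ≤ (ε + η) * P := by
      rw [add_mul]
      gcongr

variable {a b c d a' b' c' d' : K}

theorem one_sub_sq_mul_le_norm_mul_of_norm_sub_le {r C D : ℝ} (hr : r ≤ 1) (hD : 0 ≤ D)
    (hc' : C ≤ ‖c'‖) (hd' : D ≤ ‖d'‖)
    (hc : ‖c - c'‖ ≤ r * C) (hd : ‖d - d'‖ ≤ r * D) :
    (1 - r) ^ 2 * (C * D) ≤ ‖c * d‖ :=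
  calc
    (1 - r) ^ 2 * (C * D) = (1 - r) * C * ((1 - r) * D) := by ring
    _ ≤ ‖c‖ * ‖d‖ :=
      mul_le_mul (one_sub_mul_le_norm_of_norm_sub_le hc' hc)
        (one_sub_mul_le_norm_of_norm_sub_le hd' hd) (mul_nonneg (sub_nonneg.2 hr) hD)
        (norm_nonneg c)
    _ = ‖c * d‖ := (norm_mul c d).symm

theorem norm_mul_div_mul_sub_le_of_norm_sub_le {r A B C D : ℝ} (hr : r < 1) (hC : 0 < C)
    (hD : 0 < D) (ha' : ‖a'‖ ≤ A) (hb' : ‖b'‖ ≤ B) (hc' : C ≤ ‖c'‖) (hd' : D ≤ ‖d'‖)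
    (ha : ‖a - a'‖ ≤ r * A) (hb : ‖b - b'‖ ≤ r * B)
    (hc : ‖c - c'‖ ≤ r * C) (hd : ‖d - d'‖ ≤ r * D) :
    ‖a * b / (c * d) - a' * b' / (c' * d')‖ ≤
      2 * ((1 + r) ^ 2 - 1) * (A * B) / ((1 - r) ^ 2 * (C * D)) := by
  have hr₀ : 0 ≤ r := nonneg_of_mul_nonneg_left ((norm_nonneg _).trans hc) hC
  have hA : 0 ≤ A := (norm_nonneg _).trans ha'
  have hB : 0 ≤ B := (norm_nonneg _).trans hb'
  have hc_rel : ‖c - c'‖ ≤ r * ‖c'‖ := hc.trans (by gcongr)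
  have hd_rel : ‖d - d'‖ ≤ r * ‖d'‖ := hd.trans (by gcongr)
  have hcd_lower : (1 - r) ^ 2 * (C * D) ≤ ‖c * d‖ :=
    one_sub_sq_mul_le_norm_mul_of_norm_sub_le hr.le hD.le hc' hd' hc hd
  have hlower_pos : 0 < (1 - r) ^ 2 * (C * D) :=
    mul_pos (pow_pos (sub_pos.2 hr) 2) (mul_pos hC hD)
  have hcd : c * d ≠ 0 := norm_pos_iff.1 (hlower_pos.trans_le hcd_lower)
  have hcd' : c' * d' ≠ 0 :=
    mul_ne_zero (norm_pos_iff.1 (hC.trans_le hc')) (norm_pos_iff.1 (hD.trans_le hd'))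
  have hnum := norm_mul_sub_mul_le_of_norm_sub_le ha' hb' ha hb
  have hden := norm_mul_sub_mul_le_of_norm_sub_le le_rfl le_rfl hc_rel hd_rel
  rw [← norm_mul] at hden
  have hr_sq : 0 ≤ (1 + r) ^ 2 - 1 := sub_nonneg.2 (one_le_pow₀ (by linarith))
  calc
    ‖a * b / (c * d) - a' * b' / (c' * d')‖
      ≤ ((1 + r) * (1 + r) - 1 + ((1 + r) * (1 + r) - 1)) * (A * B) / ‖c * d‖ :=
        norm_div_sub_div_le_of_norm_sub_le hcd hcd' (norm_mul_le_of_le ha' hb') hnum hden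
    _ = 2 * ((1 + r) ^ 2 - 1) * (A * B) / ‖c * d‖ := by rw [← two_mul, ← sq]
    _ ≤ 2 * ((1 + r) ^ 2 - 1) * (A * B) / ((1 - r) ^ 2 * (C * D)) := by gcongr

theorem two_mul_one_add_sq_sub_one_div_one_sub_sq_le {r : ℝ} (hr₀ : 0 ≤ r) (hr : r ≤ 2 / 5) :
    2 * ((1 + r) ^ 2 - 1) / (1 - r) ^ 2 ≤ 16 * r := by
  have hsq : (3 / 5) ^ 2 ≤ (1 - r) ^ 2 := by gcongr; linarith
  rw [div_le_iff₀ (by linarith)]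
  calc
    2 * ((1 + r) ^ 2 - 1) = r * (4 + 2 * r) := by ring
    _ ≤ r * (16 * (1 - r) ^ 2) := by gcongr; linarith
    _ = 16 * r * (1 - r) ^ 2 := by ring

theorem ratio_perturbation_bound_general {δ s M : ℝ} (hs : 0 < s) (hsM : s ≤ M)
    (ha : ‖a - a'‖ ≤ δ) (hb : ‖b - b'‖ ≤ δ) (hc : ‖c - c'‖ ≤ δ) (hd : ‖d - d'‖ ≤ δ)
    (ha' : ‖a'‖ ≤ M) (hb' : ‖b'‖ ≤ M) (hc' : s ≤ ‖c'‖) (hd' : s ≤ ‖d'‖)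
    (hratio : δ / s ≤ 0.4) :
    ‖a * b / (c * d) - a' * b' / (c' * d')‖ ≤ 16 * δ * M ^ 2 / s ^ 3 := by
  have hr : δ / s ≤ 2 / 5 := hratio.trans (by norm_num)
  have hr₀ : 0 ≤ δ / s := div_nonneg ((norm_nonneg _).trans ha) hs.le
  have hδs : δ = δ / s * s := (div_mul_cancel₀ δ hs.ne').symm
  have hδM : δ ≤ δ / s * M := hδs.trans_le (by gcongr)
  calc
    ‖a * b / (c * d) - a' * b' / (c' * d')‖
      ≤ 2 * ((1 + δ / s) ^ 2 - 1) * (M * M) / ((1 - δ / s) ^ 2 * (s * s)) :=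
        norm_mul_div_mul_sub_le_of_norm_sub_le (by linarith) hs hs ha' hb' hc' hd'
          (ha.trans hδM) (hb.trans hδM) (hc.trans_eq hδs) (hd.trans_eq hδs)
    _ = 2 * ((1 + δ / s) ^ 2 - 1) / (1 - δ / s) ^ 2 * (M ^ 2 / s ^ 2) := by
      rw [mul_div_mul_comm, ← sq, ← sq]
    _ ≤ 16 * (δ / s) * (M ^ 2 / s ^ 2) := by
      gcongr
      exact two_mul_one_add_sq_sub_one_div_one_sub_sq_le hr₀ hr
    _ = 16 * δ * M ^ 2 / s ^ 3 := by field_simp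

end NormedDivisionRing

/-- Perturbation bound for covariance ratios: if `a, b, c, d` are within `δ` of
`ã, b̃, c̃, d̃`, the latter are at least `s > 0` in absolute value, `|ã| ≤ 1`, `|b̃| ≤ 1`, and
`δ/s ≤ 0.4`, then `|ab/(cd) - ãb̃/(c̃d̃)| ≤ 16δ/s³`. -/
theorem ratio_perturbation_bound (a b c d ta tb tc td δ s : ℝ)
    (hδ : 0 ≤ δ) (hs : 0 < s)
    (ha : |a - ta| ≤ δ) (hb : |b - tb| ≤ δ) (hc : |c - tc| ≤ δ) (hd : |d - td| ≤ δ)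
    (hta : s ≤ |ta|) (htb : s ≤ |tb|) (htc : s ≤ |tc|) (htd : s ≤ |td|)
    (hta1 : |ta| ≤ 1) (htb1 : |tb| ≤ 1)
    (hratio : δ / s ≤ 0.4) :
    |a * b / (c * d) - ta * tb / (tc * td)| ≤ 16 * δ / s ^ 3 := by
  simpa using ratio_perturbation_bound_general (K := ℝ) hs (hta.trans hta1) ha hb hc hd
    hta1 htb1 htc htd hratio
end

section
/- (Core identity of the unidentifiability construction: leaf–neighbor swap) Let q_1, q_2, q_k ∈ [0, 1/2) and let Σ_{1,1}, Σ_{2,2}, Σ_{1,2}, Σ_{1,k}, Σ_{2,k} be real numbers with Σ_{2,2} > 0 and D := Σ_{1,2}²/Σ_{2,2} − Σ_{1,1} + 1 ∈ (0, 1], satisfying the correlation-decay relation Σ_{1,k}·Σ_{2,2} = Σ_{1,2}·Σ_{2,k}. Define the noisy quantities Σ'_{1,2} = (1−2q_1)(1−2q_2)Σ_{1,2}, Σ'_{1,k} = (1−2q_1)(1−2q_k)Σ_{1,k}, Σ'_{2,k} = (1−2q_2)(1−2q_k)Σ_{2,k}, and Σ'_{1,1} = 1 − (1−2q_1)²(1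 − Σ_{1,1}). Define q̂_1 = (1/2)(1 − (1−2q_1)√D), q̂_2 = 0, q̂_k = q_k, and the re-estimated quantities Σ̂_{1,2} = Σ'_{1,2}/((1−2q̂_1)(1−2q̂_2)), Σ̂_{1,k} = Σ'_{1,k}/((1−2q̂_1)(1−2q̂_k)), Σ̂_{2,k} = Σ'_{2,k}/((1−2q̂_2)(1−2q̂_k)), and Σ̂_{1,1} = 1 − (1 − Σ'_{1,1})/(1−2q̂_1)². Then Σ̂_{2,k}·Σ̂_{1,1} = Σ̂_{1,k}·Σ̂_{1,2}. -/
/-!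
Put `a = 1 - 2 * q1` and `b = 1 - 2 * qh1`. Swapping the leaf with its neighbor requires
`E11 = E1k * E12 / E2k`. In this ratio the factors of `X_2` and `X_k` cancel, whatever error
probabilities are assigned to them, and correlation decay turns it into
`(a / b) ^ 2 * (S12 ^ 2 / S22)`. Since `E11 = 1 - (a / b) ^ 2 * (1 - S11)`, the requirement
becomes `b ^ 2 = a ^ 2 * D` with `D = S12 ^ 2 / S22 - S11 + 1`.
-/

section Field

variable {K : Type*} [Field K]

/-- The covariance observed between two `±1`-valued variables with covariance `c` after
independent sign flips with probabilities `p` and `q`; the paper's `Σ'_{i,j}`. -/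
def noisyCov (p q c : K) : K := (1 - 2 * p) * (1 - 2 * q) * c

/-- The variance observed for a `±1`-valued variable of variance `v` after a sign flip with
probability `q`; the paper's `Σ'_{i,i}`. The mean is scaled by `1 - 2 * q`, and the variance is
one minus its square. -/
def noisyVar (q v : K) : K := 1 - (1 - 2 * q) ^ 2 * (1 - v)

/-- The covariance re-estimated from an observed covariance `c` under assumed flip probabilities
`p` and `q`; the paper's `Σ̂_{i,j}`. It inverts `noisyCov p q` only if `1 - 2 * p` and
`1 - 2 * q` are nonzero. -/
def denoisedCov (p q c : K) : K := c / ((1 - 2 * p) * (1 - 2 * q))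

/-- The variance re-estimated from an observed variance `v` under an assumed flip probability `q`;
the paper's `Σ̂_{i,i}`. It inverts `noisyVar q` only if `1 - 2 * q` is nonzero. -/
def denoisedVar (q v : K) : K := 1 - (1 - v) / (1 - 2 * q) ^ 2

theorem noisyCov_denoisedCov {p q : K} (hp : 1 - 2 * p ≠ 0) (hq : 1 - 2 * q ≠ 0) (c : K) :
    noisyCov p q (denoisedCov p q c) = c :=
  mul_div_cancel₀ c (mul_ne_zero hp hq)

theorem noisyVar_denoisedVar {q : K} (hq : 1 - 2 * q ≠ 0) (v : K) :
    noisyVar q (denoisedVar q v) = v := by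
  rw [noisyVar, denoisedVar, sub_sub_cancel, mul_div_cancel₀ _ (pow_ne_zero 2 hq), sub_sub_cancel]

theorem sq_mul_eq_of_noisyVar_eq {q p v w t : K} (hvar : noisyVar p w = noisyVar q v)
    (hp : (1 - 2 * p) ^ 2 = (1 - 2 * q) ^ 2 * (t - v + 1)) :
    (1 - 2 * p) ^ 2 * w = (1 - 2 * q) ^ 2 * t := by
  unfold noisyVar at hvar
  linear_combination hvar + hp

theorem leaf_neighbor_swap_general {q1 q2 qk qh1 qh2 qhk S11 S22 S12 S1k S2k : K}
    (hS22 : S22 ≠ 0) (hdecay : S1k * S22 = S12 * S2k)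
    (hqh1 : 1 - 2 * qh1 ≠ 0) (hqh2 : 1 - 2 * qh2 ≠ 0) (hqhk : 1 - 2 * qhk ≠ 0)
    (hqh1_sq : (1 - 2 * qh1) ^ 2 = (1 - 2 * q1) ^ 2 * (S12 ^ 2 / S22 - S11 + 1)) :
    denoisedCov qh2 qhk (noisyCov q2 qk S2k) * denoisedVar qh1 (noisyVar q1 S11) =
      denoisedCov qh1 qhk (noisyCov q1 qk S1k) * denoisedCov qh1 qh2 (noisyCov q1 q2 S12) := by
  set E2k := denoisedCov qh2 qhk (noisyCov q2 qk S2k) with hE2k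
  set E1k := denoisedCov qh1 qhk (noisyCov q1 qk S1k) with hE1k
  set E12 := denoisedCov qh1 qh2 (noisyCov q1 q2 S12) with hE12
  set E11 := denoisedVar qh1 (noisyVar q1 S11)
  have hvar : (1 - 2 * qh1) ^ 2 * E11 = (1 - 2 * q1) ^ 2 * (S12 ^ 2 / S22) :=
    sq_mul_eq_of_noisyVar_eq (noisyVar_denoisedVar hqh1 _) hqh1_sq
  have hS1k : S1k = S12 * S2k / S22 := eq_div_of_mul_eq hS22 hdecay
  have hfactor : (1 - 2 * qh1) ^ 2 * ((1 - 2 * qh2) * (1 - 2 * qhk)) ≠ 0 :=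
    mul_ne_zero (pow_ne_zero 2 hqh1) (mul_ne_zero hqh2 hqhk)
  apply mul_left_cancel₀ hfactor
  calc (1 - 2 * qh1) ^ 2 * ((1 - 2 * qh2) * (1 - 2 * qhk)) * (E2k * E11)
      = noisyCov qh2 qhk E2k * ((1 - 2 * qh1) ^ 2 * E11) := by unfold noisyCov; ring
    _ = noisyCov q2 qk S2k * ((1 - 2 * q1) ^ 2 * (S12 ^ 2 / S22)) := by
      rw [hvar, hE2k, noisyCov_denoisedCov hqh2 hqhk]
    _ = noisyCov q1 qk S1k * noisyCov q1 q2 S12 := by rw [hS1k]; unfold noisyCov; ring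
    _ = noisyCov qh1 qhk E1k * noisyCov qh1 qh2 E12 := by
      rw [hE1k, hE12, noisyCov_denoisedCov hqh1 hqhk, noisyCov_denoisedCov hqh1 hqh2]
    _ = (1 - 2 * qh1) ^ 2 * ((1 - 2 * qh2) * (1 - 2 * qhk)) * (E1k * E12) := by
      unfold noisyCov; ring

end Field

/-- The error probability that rescales the factor `1 - 2 * q` by `√D`; with `q = q_1` it is the
paper's `q̂_1`, the error probability assigned to the former leaf after the swap. -/
noncomputable def swapErrorProb (q D : ℝ) : ℝ := (1 / 2) * (1 - (1 - 2 * q) * Real.sqrt D)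

theorem one_sub_two_mul_swapErrorProb (q D : ℝ) :
    1 - 2 * swapErrorProb q D = (1 - 2 * q) * Real.sqrt D := by
  unfold swapErrorProb
  ring

theorem one_sub_two_mul_swapErrorProb_pos {q D : ℝ} (hq : q < 1 / 2) (hD : 0 < D) :
    0 < 1 - 2 * swapErrorProb q D := by
  rw [one_sub_two_mul_swapErrorProb]
  exact mul_pos (by linarith) (Real.sqrt_pos.mpr hD)

theorem one_sub_two_mul_swapErrorProb_sq (q : ℝ) {D : ℝ} (hD : 0 ≤ D) :
    (1 - 2 * swapErrorProb q D) ^ 2 = (1 - 2 * q) ^ 2 * D := by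
  rw [one_sub_two_mul_swapErrorProb, mul_pow, Real.sq_sqrt hD]

/-- Core identity of the unidentifiability construction: leaf–neighbor swap.
Here `S__` denote non-noisy covariances, `N__` the noisy covariances, `qh_` the alternative
error probabilities, and `E__` the re-estimated covariances; the hypothesis
`S1k ⬝ S22 = S12 ⬝ S2k` encodes `X_1 ⊥ X_k | X_2` and the conclusion
`E2k ⬝ E11 = E1k ⬝ E12` encodes `X_2 ⊥ X_k | X_1`. -/
theorem leaf_neighbor_swap
    (q1 q2 qk : ℝ)
    (hq1 : 0 ≤ q1) (hq1' : q1 < 1 / 2)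
    (hq2 : 0 ≤ q2) (hq2' : q2 < 1 / 2)
    (hqk : 0 ≤ qk) (hqk' : qk < 1 / 2)
    (S11 S22 S12 S1k S2k : ℝ) (hS22 : 0 < S22)
    (D : ℝ) (hD : D = S12 ^ 2 / S22 - S11 + 1) (hD0 : 0 < D) (hD1 : D ≤ 1)
    -- correlation-decay relation encoding `X_1 ⊥ X_k | X_2`:
    (hdecay : S1k * S22 = S12 * S2k)
    -- noisy quantities:
    (N12 N1k N2k N11 : ℝ)
    (hN12 : N12 = (1 - 2 * q1) * (1 - 2 * q2) * S12)
    (hN1k : N1k = (1 - 2 * q1) * (1 - 2 * qk) * S1k)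
    (hN2k : N2k = (1 - 2 * q2) * (1 - 2 * qk) * S2k)
    (hN11 : N11 = 1 - (1 - 2 * q1) ^ 2 * (1 - S11))
    -- alternative error probabilities:
    (qh1 qh2 qhk : ℝ)
    (hqh1 : qh1 = (1 / 2) * (1 - (1 - 2 * q1) * Real.sqrt D))
    (hqh2 : qh2 = 0) (hqhk : qhk = qk)
    -- re-estimated quantities:
    (E12 E1k E2k E11 : ℝ)
    (hE12 : E12 = N12 / ((1 - 2 * qh1) * (1 - 2 * qh2)))
    (hE1k : E1k = N1k / ((1 - 2 * qh1) * (1 - 2 * qhk)))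
    (hE2k : E2k = N2k / ((1 - 2 * qh2) * (1 - 2 * qhk)))
    (hE11 : E11 = 1 - (1 - N11) / (1 - 2 * qh1) ^ 2) :
    E2k * E11 = E1k * E12 := by
  subst_vars
  exact leaf_neighbor_swap_general hS22.ne' hdecay (one_sub_two_mul_swapErrorProb_pos hq1' hD0).ne'
    (by norm_num) (by linarith) (one_sub_two_mul_swapErrorProb_sq q1 hD0.le)
end
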